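/- arXiv:2202.11137 — 4 statements merged into one kernel-verified Lean document; each statement's English description precedes it below -/
import Mathlib

section
/- Let C_0 > 1. For all x, y ∈ [0,∞)^n and s ∈ (−1,1)^n with q_−(x,y,s) > C_0²/(1 + |x| + |y|)², one has |x|² + |y|² > C_0/8. Moreover, if in addition Σ_{i=1}^n x_i y_i s_i ≥ 0, then q_+(x,y,s)·q_−(x,y,s) > C_0²/32. -/
/-!
Write `t = |x| + |y|`. Cauchy–Schwarz gives `q₋ ≤ t²`, so the hypothesis forces `C₀ < t (1 + t)`.
At `t = 1/3` the right-hand side is `4/9`, so `C₀ ≥ 4/9` gives `t > 1/3`, which is the same as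
`1 + t < 4 t`: the weight `1 + t` may be traded for `4 t`. Hence `t² > C₀/4` and `t² q₋ > C₀²/16`.
The theorem follows from `t² ≤ 2 (|x|² + |y|²)` and, when `∑ xᵢyᵢsᵢ ≥ 0`, `|x|² + |y|² ≤ q₊`.
-/

theorem abs_sum_mul_mul_le_sqrt_mul_sqrt {ι : Type*} (S : Finset ι) (x y : ι → ℝ) {s : ι → ℝ}
    (hs : ∀ i ∈ S, |s i| ≤ 1) :
    |∑ i ∈ S, x i * y i * s i| ≤ √(∑ i ∈ S, x i ^ 2) * √(∑ i ∈ S, y i ^ 2) :=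
  calc
    |∑ i ∈ S, x i * y i * s i| ≤ ∑ i ∈ S, |x i * y i * s i| := Finset.abs_sum_le_sum_abs _ _
    _ ≤ ∑ i ∈ S, |x i| * |y i| := Finset.sum_le_sum fun i hi => by
      rw [abs_mul, abs_mul]
      exact mul_le_of_le_one_right (by positivity) (hs i hi)
    _ ≤ √(∑ i ∈ S, x i ^ 2) * √(∑ i ∈ S, y i ^ 2) := by
      simpa only [sq_abs] using
        Real.sum_mul_le_sqrt_mul_sqrt S (fun i => |x i|) fun i => |y i|

theorem sq_sqrt_add_sqrt_le {a b : ℝ} (ha : 0 ≤ a) (hb : 0 ≤ b) :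
    (√a + √b) ^ 2 ≤ 2 * (a + b) := by
  simpa only [Real.sq_sqrt ha, Real.sq_sqrt hb] using add_sq_le (a := √a) (b := √b)

section QuadraticForms

variable {ι : Type*} [Fintype ι] {x y s : ι → ℝ}

/-- The form `q₊(x, y, s)`, bounded below on the global region through its product with `qMinus`;
the sum is kept coordinatewise, over an arbitrary finite index type. -/
def qPlus (x y s : ι → ℝ) : ℝ :=
  ∑ i, (x i ^ 2 + y i ^ 2 + 2 * x i * y i * s i)

/-- The form `q₋(x, y, s)`, whose size defines the global region; encoded as `qPlus` is. -/
def qMinus (x y s : ι → ℝ) : ℝ :=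
  ∑ i, (x i ^ 2 + y i ^ 2 - 2 * x i * y i * s i)

theorem qPlus_eq (x y s : ι → ℝ) :
    qPlus x y s = ∑ i, x i ^ 2 + ∑ i, y i ^ 2 + 2 * ∑ i, x i * y i * s i := by
  simp only [qPlus, Finset.sum_add_distrib, Finset.mul_sum, mul_assoc]

theorem qMinus_eq (x y s : ι → ℝ) :
    qMinus x y s = ∑ i, x i ^ 2 + ∑ i, y i ^ 2 - 2 * ∑ i, x i * y i * s i := by
  simp only [qMinus, Finset.sum_sub_distrib, Finset.sum_add_distrib, Finset.mul_sum, mul_assoc]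

theorem sum_sq_add_sum_sq_le_qPlus (h : 0 ≤ ∑ i, x i * y i * s i) :
    ∑ i, x i ^ 2 + ∑ i, y i ^ 2 ≤ qPlus x y s := by
  rw [qPlus_eq]
  linarith

theorem qMinus_le_sq_sqrt_add_sqrt (hs : ∀ i, |s i| ≤ 1) :
    qMinus x y s ≤ (√(∑ i, x i ^ 2) + √(∑ i, y i ^ 2)) ^ 2 := by
  have hcs := (abs_le.mp (abs_sum_mul_mul_le_sqrt_mul_sqrt Finset.univ x y fun i _ => hs i)).1
  rw [qMinus_eq, add_sq, Real.sq_sqrt (by positivity), Real.sq_sqrt (by positivity)]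
  linarith

end QuadraticForms

section Scalar

variable {a b C q t : ℝ}

theorem lt_mul_of_sq_div_sq_lt_sq (ha : 0 ≤ a) (hb : 0 < b) (h : C ^ 2 / b ^ 2 < a ^ 2) :
    C < a * b := by
  rw [div_lt_iff₀ (by positivity), ← mul_pow] at h
  exact lt_of_pow_lt_pow_left₀ 2 (by positivity) h

theorem sq_lt_sq_mul_of_sq_div_sq_lt (hb : 0 < b) (hba : b ≤ a) (h : C ^ 2 / b ^ 2 < q) :
    C ^ 2 < a ^ 2 * q := by
  have hq : 0 ≤ q := le_trans (by positivity) h.le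
  calc
    C ^ 2 < b ^ 2 * q := (div_lt_iff₀' (by positivity)).mp h
    _ ≤ a ^ 2 * q := by gcongr

theorem one_add_lt_four_mul (hC : 4 / 9 ≤ C) (ht : 0 ≤ t) (h : C < t * (1 + t)) :
    1 + t < 4 * t := by
  by_contra! hle
  have : t * (1 + t) ≤ 1 / 3 * (1 + 1 / 3) := by gcongr <;> linarith
  linarith

end Scalar

theorem global_region_lower_bounds_general {ι : Type*} [Fintype ι] {C : ℝ} (hC : 4 / 9 ≤ C)
    {x y s : ι → ℝ} (hs : ∀ i, |s i| ≤ 1)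
    (hglob : C ^ 2 / (1 + √(∑ i, x i ^ 2) + √(∑ i, y i ^ 2)) ^ 2 < qMinus x y s) :
    C / 8 < ∑ i, x i ^ 2 + ∑ i, y i ^ 2 ∧
      (0 ≤ ∑ i, x i * y i * s i → C ^ 2 / 32 < qPlus x y s * qMinus x y s) := by
  have hnorm : (√(∑ i, x i ^ 2) + √(∑ i, y i ^ 2)) ^ 2 ≤ 2 * (∑ i, x i ^ 2 + ∑ i, y i ^ 2) :=
    sq_sqrt_add_sqrt_le (by positivity) (by positivity)
  have hq_le := qMinus_le_sq_sqrt_add_sqrt (x := x) (y := y) hs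
  have hq_nonneg : 0 ≤ qMinus x y s := le_trans (by positivity) hglob.le
  have ht : 0 ≤ √(∑ i, x i ^ 2) + √(∑ i, y i ^ 2) := by positivity
  rw [add_assoc] at hglob
  set t := √(∑ i, x i ^ 2) + √(∑ i, y i ^ 2)
  have hCt : C < t * (1 + t) :=
    lt_mul_of_sq_div_sq_lt_sq ht (by positivity) (hglob.trans_le hq_le)
  have h4 : 1 + t < 4 * t := one_add_lt_four_mul hC ht hCt
  refine ⟨?_, fun hpair => ?_⟩
  · have : t * (1 + t) ≤ t * (4 * t) := by gcongr
    linarith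
  · calc
      C ^ 2 / 32 < t ^ 2 / 2 * qMinus x y s := by
        linarith [sq_lt_sq_mul_of_sq_div_sq_lt (by positivity) h4.le hglob, mul_pow 4 t 2]
      _ ≤ qPlus x y s * qMinus x y s := by
        gcongr
        linarith [sum_sq_add_sum_sq_le_qPlus hpair]

/-- On the global region `G₁` (i.e. when `q₋(x,y,s) > C₀²/(1+|x|+|y|)²`, `C₀ > 1`),
one has `|x|² + |y|² > C₀/8`; moreover, if in addition `Σᵢ xᵢyᵢsᵢ ≥ 0`, then
`q₊(x,y,s)·q₋(x,y,s) > C₀²/32`. Here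
`q±(x,y,s) = Σᵢ (xᵢ² + yᵢ² ± 2xᵢyᵢsᵢ)` and `|·|` is the Euclidean norm. -/
theorem global_region_lower_bounds (n : ℕ) (C0 : ℝ) (hC0 : 1 < C0)
    (x y s : Fin n → ℝ)
    (hx : ∀ i, 0 ≤ x i) (hy : ∀ i, 0 ≤ y i)
    (hs : ∀ i, s i ∈ Set.Ioo (-1 : ℝ) 1)
    (hglob : C0 ^ 2 / (1 + Real.sqrt (∑ i, x i ^ 2) + Real.sqrt (∑ i, y i ^ 2)) ^ 2 <
      ∑ i, (x i ^ 2 + y i ^ 2 - 2 * x i * y i * s i)) :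
    C0 / 8 < (∑ i, x i ^ 2) + ∑ i, y i ^ 2 ∧
    (0 ≤ ∑ i, x i * y i * s i →
      C0 ^ 2 / 32 <
        (∑ i, (x i ^ 2 + y i ^ 2 + 2 * x i * y i * s i)) *
          (∑ i, (x i ^ 2 + y i ^ 2 - 2 * x i * y i * s i))) :=
  global_region_lower_bounds_general (by linarith)
    (fun i => abs_le.mpr ⟨(hs i).1.le, (hs i).2.le⟩) hglob
end

section
/- Let γ > 0 and let a, b ∈ ℝ with a ≥ γ and b ≤ 0. Define v(t) = t^{−γ} · exp(−(a − b√(1−t))/t) for t ∈ (0,1). Then v is monotone nondecreasing on (0,1), and consequently sup_{t ∈ (0,1)} v(t) ≤ e^{−a}. -/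
/-!
Up to sign, the logarithm of `t ^ (-γ) * exp (-a / t)` is `γ * log t + a / t`, whose derivative
`(γ * t - a) / t ^ 2` is nonpositive as long as `γ * t ≤ a`. For `b ≤ 0` the remaining factor
`exp (b * (√(1 - t) / t))` is also nondecreasing, and the bound is the value at `t = 1`.
-/

open Real Set

theorem hasDerivAt_mul_log_add_div (γ a : ℝ) {t : ℝ} (ht : t ≠ 0) :
    HasDerivAt (fun t ↦ γ * log t + a / t) ((γ * t - a) / t ^ 2) t := by
  have hasDeriv := ((hasDerivAt_log ht).const_mul γ).fun_add ((hasDerivAt_inv ht).const_mul a)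
  exact hasDeriv.congr_deriv (by field)

theorem antitoneOn_mul_log_add_div (γ a : ℝ) :
    AntitoneOn (fun t ↦ γ * log t + a / t) {t | 0 < t ∧ γ * t ≤ a} := by
  have convex_domain : Convex ℝ {t | 0 < t ∧ γ * t ≤ a} :=
    (convex_Ioi 0).inter (convex_halfSpace_le (IsLinearMap.isLinearMap_smul γ) a)
  have hasDeriv {t : ℝ} (ht : t ∈ {t | 0 < t ∧ γ * t ≤ a}) :=
    hasDerivAt_mul_log_add_div γ a ht.1.ne'
  refine antitoneOn_of_hasDerivWithinAt_nonpos convex_domain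
    (fun t ht ↦ (hasDeriv ht).continuousAt.continuousWithinAt)
    (fun t ht ↦ (hasDeriv (interior_subset ht)).hasDerivWithinAt) fun t ht ↦ ?_
  exact div_nonpos_of_nonpos_of_nonneg (sub_nonpos.2 (interior_subset ht).2) (sq_nonneg t)

theorem monotoneOn_rpow_neg_mul_exp_neg_div (γ a : ℝ) :
    MonotoneOn (fun t ↦ t ^ (-γ) * exp (-a / t)) {t | 0 < t ∧ γ * t ≤ a} := by
  have exp_form : EqOn (fun t ↦ exp (-(γ * log t + a / t)))
      (fun t ↦ t ^ (-γ) * exp (-a / t)) {t | 0 < t ∧ γ * t ≤ a} := fun t ht ↦ by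
    simp only [rpow_def_of_pos ht.1, ← exp_add]
    ring_nf
  exact (exp_monotone.comp_monotoneOn (antitoneOn_mul_log_add_div γ a).neg).congr exp_form

theorem antitoneOn_sqrt_sub_div (c : ℝ) : AntitoneOn (fun t ↦ √(c - t) / t) (Ioi 0) := by
  intro s (hs : 0 < s) t _ hst
  dsimp only
  gcongr

theorem v_monotone_of_b_nonpos_general {γ a b : ℝ} (hγa : γ ≤ a) (ha : 0 ≤ a) (hb : b ≤ 0) :
    MonotoneOn (fun t ↦ t ^ (-γ) * exp (-(a - b * √(1 - t)) / t)) (Ioc 0 1) := by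
  have domain_subset : Ioc 0 1 ⊆ {t | 0 < t ∧ γ * t ≤ a} := fun t ht ↦
    ⟨ht.1, (mul_le_mul_of_nonneg_right hγa ht.1.le).trans (mul_le_of_le_one_right ha ht.2)⟩
  have mono_left := (monotoneOn_rpow_neg_mul_exp_neg_div γ a).mono domain_subset
  have mono_right : MonotoneOn (fun t ↦ exp (b * (√(1 - t) / t))) (Ioc 0 1) :=
    fun s hs t ht hst ↦ exp_le_exp.2 <|
      mul_le_mul_of_nonpos_left (antitoneOn_sqrt_sub_div 1 hs.1 ht.1 hst) hb
  refine (mono_left.mul mono_right (fun t ht ↦ ?_) fun t _ ↦ (exp_pos _).le).congr fun t _ ↦ ?_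
  · exact mul_nonneg (rpow_nonneg ht.1.le _) (exp_pos _).le
  · simp only [Pi.mul_apply, mul_assoc, ← exp_add]
    ring_nf

/-- Let `γ > 0`, `a ≥ γ` and `b ≤ 0`. Then
`v(t) = t^(−γ) · exp(−(a − b·√(1−t))/t)` is monotone nondecreasing on `(0,1)`;
consequently `sup_{t ∈ (0,1)} v(t) ≤ e^{−a}`. -/
theorem v_monotone_of_b_nonpos (γ a b : ℝ) (hγ : 0 < γ) (ha : γ ≤ a) (hb : b ≤ 0) :
    MonotoneOn (fun t : ℝ => t ^ (-γ) * Real.exp (-(a - b * Real.sqrt (1 - t)) / t))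
      (Set.Ioo (0 : ℝ) 1) ∧
    ∀ t ∈ Set.Ioo (0 : ℝ) 1,
      t ^ (-γ) * Real.exp (-(a - b * Real.sqrt (1 - t)) / t) ≤ Real.exp (-a) := by
  have mono := v_monotone_of_b_nonpos_general ha (hγ.le.trans ha) hb
  exact ⟨mono.mono Ioo_subset_Ioc_self, fun t ht ↦ by
    simpa using mono (Ioo_subset_Ioc_self ht) (right_mem_Ioc.2 one_pos) ht.2.le⟩
end

section
/- Let k ∈ ℕ with k ≥ 1 and let a > 0. There exist constants C > 0 and c > 0 such that for every measurable function h : ℝ^k → [0,∞] and every x̄ ∈ ℝ^k, ∫_{{ȳ ∈ ℝ^k : 2|x̄−ȳ| ≥ |x̄+ȳ|}} |x̄+ȳ|^k · e^{−a|x̄−ȳ||x̄+ȳ|} · h(ȳ) dȳ ≤ C · Σ_{ℓ=0}^∞ e^{−cℓ²} ∫_{B(−x̄, ℓ+1)} h(ȳ) dȳ, where B(−x̄, r) denotes the Euclidean ball of center −x̄ and radius r and the integrals are with respect to Lebesgue measure. -/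
open MeasureTheory

/-!
On the region `‖x + y‖ ≤ 2‖x - y‖` the exponent satisfies `a‖x - y‖‖x + y‖ ≥ (a/2)‖x + y‖²`. Half
of this Gaussian decay absorbs the polynomial factor `‖x + y‖ⁿ`; the other half is at most
`exp (-(a/4) ℓ²)` on the annulus `ℓ ≤ ‖x + y‖ < ℓ + 1`, which lies in the ball of radius `ℓ + 1`
about `-x`.
-/

lemma pow_le_mul_exp_mul_sq (n : ℕ) {b : ℝ} (hb : 0 < b) (t : ℝ) :
    t ^ n ≤ (1 + n.factorial / b ^ n) * Real.exp (b * t ^ 2) := by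
  have pow_le_one_add_sq_pow : t ^ n ≤ 1 + (t ^ 2) ^ n := by
    rw [pow_right_comm]
    nlinarith [sq_nonneg (t ^ n - 1), sq_nonneg (t ^ n)]
  have one_le_exp : 1 ≤ Real.exp (b * t ^ 2) := Real.one_le_exp (by positivity)
  have sq_pow_le : (t ^ 2) ^ n ≤ n.factorial / b ^ n * Real.exp (b * t ^ 2) :=
    calc (t ^ 2) ^ n = n.factorial / b ^ n * ((b * t ^ 2) ^ n / n.factorial) := by
          rw [mul_pow]
          field_simp
      _ ≤ n.factorial / b ^ n * Real.exp (b * t ^ 2) := by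
          gcongr
          exact Real.pow_div_factorial_le_exp _ (by positivity) n
  linarith

lemma pow_mul_exp_neg_mul_le_mul_exp_neg_natFloor_sq (n : ℕ) {a s t : ℝ} (ha : 0 < a) (ht : 0 ≤ t)
    (hts : t ≤ 2 * s) :
    t ^ n * Real.exp (-a * s * t) ≤
      (1 + n.factorial / (a / 4) ^ n) * Real.exp (-(a / 4) * (⌊t⌋₊ : ℝ) ^ 2) := by
  have exponent_le : -a * s * t ≤ -(a / 2) * t ^ 2 := by
    nlinarith [mul_le_mul_of_nonneg_left hts (mul_nonneg ha.le ht)]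
  calc t ^ n * Real.exp (-a * s * t)
      ≤ (1 + n.factorial / (a / 4) ^ n) * Real.exp (a / 4 * t ^ 2) *
          Real.exp (-(a / 2) * t ^ 2) := by
        gcongr
        exact pow_le_mul_exp_mul_sq n (by positivity) t
    _ = (1 + n.factorial / (a / 4) ^ n) * Real.exp (-(a / 4 * t ^ 2)) := by
        rw [mul_assoc, ← Real.exp_add]
        ring_nf
    _ ≤ (1 + n.factorial / (a / 4) ^ n) * Real.exp (-(a / 4) * (⌊t⌋₊ : ℝ) ^ 2) := by
        rw [neg_mul]
        gcongr
        exact Nat.floor_le ht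

lemma lintegral_natFloor_dist_mul_le_tsum_ball {X : Type*} [PseudoMetricSpace X]
    [MeasurableSpace X] [OpensMeasurableSpace X] (μ : Measure X) (x : X) {w : ℕ → ENNReal}
    (hw : ∀ ℓ, w ℓ ≠ ⊤) (h : X → ENNReal) :
    ∫⁻ y, w ⌊dist y x⌋₊ * h y ∂μ ≤ ∑' ℓ : ℕ, w ℓ * ∫⁻ y in Metric.ball x (ℓ + 1), h y ∂μ := by
  let annulus (ℓ : ℕ) : Set X := {y | ⌊dist y x⌋₊ = ℓ}
  have measurableSet_annulus (ℓ : ℕ) : MeasurableSet (annulus ℓ) :=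
    (continuous_id.dist continuous_const).measurable.nat_floor (measurableSet_singleton ℓ)
  have iUnion_annulus : ⋃ ℓ, annulus ℓ = Set.univ :=
    Set.iUnion_eq_univ_iff.2 fun y => ⟨⌊dist y x⌋₊, rfl⟩
  have annulus_subset_ball (ℓ : ℕ) : annulus ℓ ⊆ Metric.ball x (ℓ + 1) := by
    rintro y rfl
    exact Metric.mem_ball.2 (Nat.lt_floor_add_one _)
  calc ∫⁻ y, w ⌊dist y x⌋₊ * h y ∂μ
      = ∫⁻ y in ⋃ ℓ, annulus ℓ, w ⌊dist y x⌋₊ * h y ∂μ := by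
        rw [iUnion_annulus, setLIntegral_univ]
    _ ≤ ∑' ℓ, ∫⁻ y in annulus ℓ, w ⌊dist y x⌋₊ * h y ∂μ := lintegral_iUnion_le _ _
    _ = ∑' ℓ, w ℓ * ∫⁻ y in annulus ℓ, h y ∂μ := by
        congr! 2 with ℓ
        rw [← lintegral_const_mul' _ _ (hw ℓ)]
        refine setLIntegral_congr_fun (measurableSet_annulus ℓ) ?_
        rintro y rfl
        rfl
    _ ≤ ∑' ℓ : ℕ, w ℓ * ∫⁻ y in Metric.ball x (ℓ + 1), h y ∂μ := by
        gcongr with ℓ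
        exact annulus_subset_ball ℓ

theorem T1_gaussian_annuli_bound_general {E : Type*} [SeminormedAddCommGroup E]
    [MeasurableSpace E] [OpensMeasurableSpace E] (μ : Measure E) (n : ℕ) {a : ℝ} (ha : 0 < a)
    (h : E → ENNReal) (x : E) :
    ∫⁻ y in {y : E | ‖x + y‖ ≤ 2 * ‖x - y‖},
        ENNReal.ofReal (‖x + y‖ ^ n * Real.exp (-a * ‖x - y‖ * ‖x + y‖)) * h y ∂μ ≤
      ENNReal.ofReal (1 + n.factorial / (a / 4) ^ n) *
        ∑' ℓ : ℕ, ENNReal.ofReal (Real.exp (-(a / 4) * (ℓ : ℝ) ^ 2)) *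
          ∫⁻ y in Metric.ball (-x) ((ℓ : ℝ) + 1), h y ∂μ := by
  set C : ℝ := 1 + n.factorial / (a / 4) ^ n
  let w (ℓ : ℕ) : ENNReal := ENNReal.ofReal (Real.exp (-(a / 4) * (ℓ : ℝ) ^ 2))
  have measurableSet_region : MeasurableSet {y : E | ‖x + y‖ ≤ 2 * ‖x - y‖} :=
    (isClosed_le (by fun_prop) (by fun_prop)).measurableSet
  have kernel_le (y : E) (hy : ‖x + y‖ ≤ 2 * ‖x - y‖) :
      ENNReal.ofReal (‖x + y‖ ^ n * Real.exp (-a * ‖x - y‖ * ‖x + y‖)) ≤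
        ENNReal.ofReal C * w ⌊dist y (-x)⌋₊ := by
    rw [dist_eq_norm, sub_neg_eq_add, add_comm y x, ← ENNReal.ofReal_mul (by positivity)]
    exact ENNReal.ofReal_le_ofReal
      (pow_mul_exp_neg_mul_le_mul_exp_neg_natFloor_sq n ha (norm_nonneg _) hy)
  calc _ ≤ ∫⁻ y in {y : E | ‖x + y‖ ≤ 2 * ‖x - y‖},
          ENNReal.ofReal C * (w ⌊dist y (-x)⌋₊ * h y) ∂μ := by
        refine setLIntegral_mono' measurableSet_region fun y hy => ?_
        rw [← mul_assoc]
        gcongr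
        exact kernel_le y hy
    _ ≤ ∫⁻ y, ENNReal.ofReal C * (w ⌊dist y (-x)⌋₊ * h y) ∂μ := setLIntegral_le_lintegral _ _
    _ = ENNReal.ofReal C * ∫⁻ y, w ⌊dist y (-x)⌋₊ * h y ∂μ :=
        lintegral_const_mul' _ _ ENNReal.ofReal_ne_top
    _ ≤ _ := by
        gcongr
        exact lintegral_natFloor_dist_mul_le_tsum_ball μ (-x) (fun _ => ENNReal.ofReal_ne_top) h

/-- **Bound for the operator `T₁`** (proof of Proposition 3.1). Let `k ≥ 1`, `a > 0`.
There are `C, c > 0` such that for every measurable `h : ℝᵏ → [0,∞]` and every `x̄ ∈ ℝᵏ`,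
`∫_{2|x̄−ȳ| ≥ |x̄+ȳ|} |x̄+ȳ|ᵏ e^{−a|x̄−ȳ||x̄+ȳ|} h(ȳ) dȳ
  ≤ C Σ_{ℓ=0}^∞ e^{−cℓ²} ∫_{B(−x̄, ℓ+1)} h(ȳ) dȳ`. -/
theorem T1_gaussian_annuli_bound (k : ℕ) (hk : 1 ≤ k) (a : ℝ) (ha : 0 < a) :
    ∃ C > (0:ℝ), ∃ c > (0:ℝ),
      ∀ h : EuclideanSpace ℝ (Fin k) → ENNReal, Measurable h →
        ∀ xb : EuclideanSpace ℝ (Fin k),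
          (∫⁻ yb in {yb : EuclideanSpace ℝ (Fin k) | ‖xb + yb‖ ≤ 2 * ‖xb - yb‖},
              ENNReal.ofReal (‖xb + yb‖ ^ k *
                Real.exp (-a * ‖xb - yb‖ * ‖xb + yb‖)) * h yb) ≤
            ENNReal.ofReal C *
              ∑' ℓ : ℕ, ENNReal.ofReal (Real.exp (-c * (ℓ : ℝ) ^ 2)) *
                ∫⁻ yb in Metric.ball (-xb) ((ℓ : ℝ) + 1), h yb := by
  exact ⟨1 + k.factorial / (a / 4) ^ k, by positivity, a / 4, by positivity,
    fun h _ xb => T1_gaussian_annuli_bound_general volume k ha h xb⟩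
end

section
/- Let n ≥ 1 and α = (α_1,…,α_n) ∈ [0,∞)^n, and let 𝔪_α be the measure on (0,∞)^n with density ∏_{i=1}^n x_i^{2α_i+1} with respect to Lebesgue measure. Then 𝔪_α is doubling: there exists C > 0 such that for every x ∈ (0,∞)^n and every r > 0, 𝔪_α(B(x,2r) ∩ (0,∞)^n) ≤ C · 𝔪_α(B(x,r) ∩ (0,∞)^n), where B(x,r) is the Euclidean ball of center x and radius r. -/
open MeasureTheory

/-!
The homothety `z ↦ x + c⁻¹ (z - x)` with `c ≥ 1` maps `B(x, c r)` into `B(x, r)`, and for `x ≥ 0` it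
preserves the positive orthant. There each coordinate of the image is at least `c⁻¹ zᵢ`, so a
monomial weight `∏ zᵢ ^ pᵢ` with `pᵢ ≥ 0` decreases by a factor of at most `c ^ ∑ pᵢ`. Changing
variables costs the Jacobian `c ^ n`, which gives the constant `c ^ (n + ∑ pᵢ)`.
-/

section Homothety

open AffineMap Module

variable {E : Type*} [NormedAddCommGroup E] [NormedSpace ℝ E]

theorem mapsTo_homothety_inv_ball {c : ℝ} (hc : 0 < c) (x : E) (r : ℝ) :
    Set.MapsTo (homothety x c⁻¹) (Metric.ball x (c * r)) (Metric.ball x r) := by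
  intro z hz
  rw [Metric.mem_ball, dist_homothety_center, Real.norm_of_nonneg (inv_nonneg.2 hc.le),
    inv_mul_lt_iff₀ hc, dist_comm]
  exact hz

variable [FiniteDimensional ℝ E] [MeasurableSpace E] [BorelSpace E]

theorem measurableEmbedding_homothety (x : E) {c : ℝ} (hc : c ≠ 0) :
    MeasurableEmbedding (homothety x c) :=
  (AffineEquiv.homothetyUnitsMulHom x
    (Units.mk0 c hc)).toContinuousAffineEquiv.toHomeomorph.measurableEmbedding

variable (μ : Measure E) [μ.IsAddHaarMeasure]

theorem map_homothety_addHaar (x : E) {c : ℝ} (hc : c ≠ 0) :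
    μ.map (homothety x c) = ENNReal.ofReal |(c ^ finrank ℝ E)⁻¹| • μ := by
  have homothety_eq : ⇑(homothety x c) = (· + (x - c • x)) ∘ (c • ·) := by
    ext z
    simp only [homothety_apply, vsub_eq_sub, vadd_eq_add, Function.comp_apply]
    module
  rw [homothety_eq, ← Measure.map_map (by fun_prop) (by fun_prop), Measure.map_addHaar_smul μ hc,
    Measure.map_smul, map_add_right_eq_self]

theorem withDensity_le_of_mapsTo_homothety {x : E} {c : ℝ} (hc : c ≠ 0) {s t : Set E}
    (hs : MeasurableSet s) (hst : Set.MapsTo (homothety x c) s t) {w : E → ENNReal}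
    {A : ENNReal} (hA : A ≠ ⊤) (hw : ∀ z ∈ s, w z ≤ A * w (homothety x c z)) :
    μ.withDensity w s ≤ A * ENNReal.ofReal |(c ^ finrank ℝ E)⁻¹| * μ.withDensity w t := by
  have h_embedding := measurableEmbedding_homothety x hc
  rw [withDensity_apply' w s, withDensity_apply' w t]
  calc ∫⁻ z in s, w z ∂μ
      ≤ ∫⁻ z in s, A * w (homothety x c z) ∂μ := setLIntegral_mono' hs hw
    _ = A * ∫⁻ z in s, w (homothety x c z) ∂μ := lintegral_const_mul' _ _ hA
    _ ≤ A * ∫⁻ z in homothety x c ⁻¹' t, w (homothety x c z) ∂μ := by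
        gcongr
        exact hst
    _ = A * ∫⁻ z in t, w z ∂(μ.map (homothety x c)) := by
        rw [h_embedding.restrict_map, h_embedding.lintegral_map]
    _ = A * ENNReal.ofReal |(c ^ finrank ℝ E)⁻¹| * ∫⁻ z in t, w z ∂μ := by
        rw [map_homothety_addHaar μ x hc, Measure.restrict_smul, lintegral_smul_measure,
          smul_eq_mul, mul_assoc]

end Homothety

section Orthant

open AffineMap

/-- The open positive orthant `(0, ∞)^ι`. -/
def positiveOrthant (ι : Type*) : Set (EuclideanSpace ℝ ι) :=
  {z | ∀ i, 0 < z i}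

variable {ι : Type*}

theorem inv_mul_le_homothety_inv_apply {x : EuclideanSpace ℝ ι} {i : ι} (hx : 0 ≤ x i) {c : ℝ}
    (hc : 1 ≤ c) (z : EuclideanSpace ℝ ι) : c⁻¹ * z i ≤ homothety x c⁻¹ z i := by
  have homothety_coord : homothety x c⁻¹ z i = (1 - c⁻¹) * x i + c⁻¹ * z i := by
    simp only [homothety_apply, vsub_eq_sub, vadd_eq_add, PiLp.add_apply, PiLp.smul_apply,
      PiLp.sub_apply, smul_eq_mul]
    ring
  rw [homothety_coord]
  exact le_add_of_nonneg_left (mul_nonneg (sub_nonneg.2 (inv_le_one_of_one_le₀ hc)) hx)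

theorem mapsTo_homothety_inv_positiveOrthant {x : EuclideanSpace ℝ ι} (hx : ∀ i, 0 ≤ x i) {c : ℝ}
    (hc : 1 ≤ c) : Set.MapsTo (homothety x c⁻¹) (positiveOrthant ι) (positiveOrthant ι) :=
  fun z hz i ↦ (mul_pos (inv_pos.2 (one_pos.trans_le hc)) (hz i)).trans_le
    (inv_mul_le_homothety_inv_apply (hx i) hc z)

theorem measurableSet_positiveOrthant [Countable ι] : MeasurableSet (positiveOrthant ι) := by
  simp only [positiveOrthant, Set.ofPred_forall]
  exact MeasurableSet.iInter fun i ↦ measurableSet_lt measurable_const (by fun_prop)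

variable [Fintype ι]

theorem prod_rpow_le_rpow_sum_mul_prod_rpow {p : ι → ℝ} (hp : ∀ i, 0 ≤ p i) {c : ℝ} (hc : 0 < c)
    {y z : ι → ℝ} (hz : ∀ i, 0 ≤ z i) (hzy : ∀ i, c⁻¹ * z i ≤ y i) :
    ∏ i, z i ^ p i ≤ c ^ (∑ i, p i) * ∏ i, y i ^ p i := by
  rw [Real.rpow_sum_of_pos hc, ← Finset.prod_mul_distrib]
  refine Finset.prod_le_prod (fun i _ ↦ Real.rpow_nonneg (hz i) _) fun i _ ↦ ?_
  have hy : 0 ≤ y i := (mul_nonneg (inv_nonneg.2 hc.le) (hz i)).trans (hzy i)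
  rw [← Real.mul_rpow hc.le hy]
  exact Real.rpow_le_rpow (hz i) ((inv_mul_le_iff₀ hc).1 (hzy i)) (hp i)

/-- The measure `∏ᵢ zᵢ ^ pᵢ dz`, to be used on `positiveOrthant ι`. It is defined on the whole
space; off the closed orthant its density has no meaning, as `Real.rpow` takes junk values at
negative bases. With `pᵢ = 2αᵢ + 1` it is `𝔪_α`. -/
noncomputable def monomialMeasure (p : ι → ℝ) : Measure (EuclideanSpace ℝ ι) :=
  volume.withDensity fun z ↦ ENNReal.ofReal (∏ i, z i ^ p i)

theorem polynomial_measure_doubling_general {p : ι → ℝ} (hp : ∀ i, 0 ≤ p i) {c : ℝ} (hc : 1 ≤ c)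
    {x : EuclideanSpace ℝ ι} (hx : ∀ i, 0 ≤ x i) (r : ℝ) :
    monomialMeasure p (Metric.ball x (c * r) ∩ positiveOrthant ι) ≤
      ENNReal.ofReal (c ^ (∑ i, p i) * c ^ Fintype.card ι) *
        monomialMeasure p (Metric.ball x r ∩ positiveOrthant ι) := by
  have hc₀ : 0 < c := one_pos.trans_le hc
  have h_mapsTo := (mapsTo_homothety_inv_ball hc₀ x r).inter_inter
    (mapsTo_homothety_inv_positiveOrthant hx hc)
  have jacobian_eq : c ^ Fintype.card ι =
      |((c⁻¹) ^ Module.finrank ℝ (EuclideanSpace ℝ ι))⁻¹| := by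
    rw [finrank_euclideanSpace, inv_pow, inv_inv, abs_of_pos (by positivity)]
  rw [ENNReal.ofReal_mul (by positivity), jacobian_eq]
  refine withDensity_le_of_mapsTo_homothety volume (inv_ne_zero hc₀.ne')
    (Metric.isOpen_ball.measurableSet.inter measurableSet_positiveOrthant) h_mapsTo
    ENNReal.ofReal_ne_top fun z hz ↦ ?_
  rw [← ENNReal.ofReal_mul (by positivity)]
  exact ENNReal.ofReal_le_ofReal <| prod_rpow_le_rpow_sum_mul_prod_rpow hp hc₀
    (fun i ↦ (hz.2 i).le) fun i ↦ inv_mul_le_homothety_inv_apply (hx i) hc z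

end Orthant

/-- **Doubling property of the polynomial measure `𝔪_α`** (for `α ∈ [0,∞)ⁿ`):
the measure on `(0,∞)ⁿ` with density `∏ᵢ x_i^{2α_i+1}` w.r.t. Lebesgue measure
satisfies `𝔪_α(B(x,2r) ∩ (0,∞)ⁿ) ≤ C · 𝔪_α(B(x,r) ∩ (0,∞)ⁿ)` for all
`x ∈ (0,∞)ⁿ` and `r > 0`, with `B(x,r)` the Euclidean ball. -/
theorem polynomial_measure_doubling (n : ℕ) (hn : 1 ≤ n)
    (α : Fin n → ℝ) (hα : ∀ i, 0 ≤ α i) :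
    ∃ C > (0:ℝ),
      ∀ x : EuclideanSpace ℝ (Fin n), (∀ i, 0 < x i) → ∀ r : ℝ, 0 < r →
        (volume.withDensity
            (fun z : EuclideanSpace ℝ (Fin n) =>
              ENNReal.ofReal (∏ i, z i ^ (2 * α i + 1))))
            (Metric.ball x (2 * r) ∩ {z : EuclideanSpace ℝ (Fin n) | ∀ i, 0 < z i}) ≤
          ENNReal.ofReal C *
            (volume.withDensity
              (fun z : EuclideanSpace ℝ (Fin n) =>
                ENNReal.ofReal (∏ i, z i ^ (2 * α i + 1))))
              (Metric.ball x r ∩ {z : EuclideanSpace ℝ (Fin n) | ∀ i, 0 < z i}) := by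
  have hp (i : Fin n) : 0 ≤ 2 * α i + 1 := by linarith [hα i]
  exact ⟨_, by positivity, fun x hx r _ ↦
    polynomial_measure_doubling_general hp one_le_two (fun i ↦ (hx i).le) r⟩
end
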